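/- If R is a retract of F_n and H is a subgroup of F_n with rk(H) ≤ 3, then rk(H ∩ R) ≤ rk(H). -/

import Mathlib

/-- `R` is a retract of the ambient group: there is an endomorphism with image `R`
restricting to the identity on `R` (equivalently, an idempotent endomorphism with image `R`). -/
def IsRetract {G : Type*} [Group G] (R : Subgroup G) : Prop :=
  ∃ r : G →* G, r.range = R ∧ ∀ x ∈ R, r x = x

/-- The subgroup `H` is free of rank `m`. -/
def HasFreeRank {G : Type*} [Group G] (H : Subgroup G) (m : ℕ) : Prop :=
  ∃ φ : FreeGroup (Fin m) →* G, Function.Injective φ ∧ φ.range = H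

/-!
Let `X` and `Y` be the Schreier graphs of the free group `F` on the cosets of the retract `R` and
of `H`. The stabilizer of the base point of `X × Y` is `H ∩ R`. Comparing cochains with their sums
along closed paths shows that a stabilizer has rank at most `m` as soon as every nonempty finite
subgraph of the Schreier graph satisfies `|E| - |V| < m`, and that the converse holds for a
transitive action. It therefore suffices that projecting a finite subgraph of `X × Y` to `Y` does
not decrease `|E| - |V|`, that is, to bound `∑ (|S e| - 1)` over the edges of the projection by
`∑ (|T v| - 1)` over its vertices, where `S e` and `T v` are the fibres, which are finite subsets
of `X`.

These summands are the dimensions of the spaces of functions of sum zero supported on the fibres.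
Precomposing with the retraction writes every cochain of `X` as the sum of a coboundary and of a
cochain depending only on the labels of the edges; dually, a chain of `X` with zero boundary and
with sum zero over each label vanishes. The inequality then holds for arbitrary families of
subspaces: extending the labelled edges to permutations of the vertices replaces the projection by
a finite Cayley graph, on which the dimension excess is supermodular. Its greatest maximizer is
translation-invariant, and for a translation-invariant family the boundary map is an injection
from the edge spaces at a vertex into the space at this vertex.
-/

/-! ### Families of subspaces over a Cayley graph -/

section Supermodular

variable {α : Type*}

theorem wellFoundedGT_pi {ι : Type*} [Finite ι] {β : ι → Type*} [∀ i, Preorder (β i)]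
    [∀ i, WellFoundedGT (β i)] : WellFoundedGT (∀ i, β i) :=
  ⟨(inferInstance : WellFoundedLT (∀ i, (β i)ᵒᵈ)).wf⟩

theorem exists_isGreatest_maximizers [Lattice α] [WellFoundedGT α] [Nonempty α] {f : α → ℤ}
    (hbdd : BddAbove (Set.range f)) (hf : ∀ a b, f a + f b ≤ f (a ⊔ b) + f (a ⊓ b)) :
    ∃ a, IsGreatest {a | ∀ b, f b ≤ f a} a := by
  obtain ⟨-, ⟨a, rfl⟩, ha⟩ := hbdd.exists_isGreatest_of_nonempty (Set.range_nonempty f)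
  obtain ⟨m, hm⟩ := exists_maximal_of_wellFoundedGT (fun a => ∀ b, f b ≤ f a)
    ⟨a, fun b => ha ⟨b, rfl⟩⟩
  have sup_mem : ∀ a, (∀ b, f b ≤ f a) → ∀ b, f b ≤ f (m ⊔ a) := fun a ha b => by
    linarith [hf m a, hm.prop (m ⊓ a), ha b]
  exact ⟨m, hm.prop, fun a ha => le_sup_right.trans (hm.le_of_ge (sup_mem a ha) le_sup_left)⟩

end Supermodular

/-- A family of edge spaces over the Cayley graph of `G` with respect to a family of elements
indexed by `ι`: the space at `(q, i)` sits on the edge with label `i` leaving `q`. -/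
abbrev EdgeFamily (G ι K V : Type*) [DivisionRing K] [AddCommGroup V] [Module K V] : Type _ :=
  G → ι → Submodule K V

namespace EdgeFamily

open Module

variable {G ι K V W : Type*} [Group G] [DivisionRing K] [AddCommGroup V] [Module K V]
  [AddCommGroup W] [Module K W] (s : ι → G) (a b : ι → V →ₗ[K] W)

/-- The spaces generated at the vertices by a family of edge spaces, when the edge with label `i`
joins `q` to `s i * q` and its tail and head maps are `a i` and `b i`. -/
def vertexHull (U : EdgeFamily G ι K V) (q : G) : Submodule K W :=
  ⨆ i, (U q i).map (a i) ⊔ (U ((s i)⁻¹ * q) i).map (b i)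

theorem vertexHull_mono (q : G) : Monotone fun U : EdgeFamily G ι K V => vertexHull s a b U q :=
  fun _ _ h => iSup_mono fun _ =>
    sup_le_sup (Submodule.map_mono (h _ _)) (Submodule.map_mono (h _ _))

theorem vertexHull_sup (U U' : EdgeFamily G ι K V) (q : G) :
    vertexHull s a b (U ⊔ U') q = vertexHull s a b U q ⊔ vertexHull s a b U' q := by
  simp only [vertexHull, Pi.sup_apply, Submodule.map_sup, ← iSup_sup_eq]
  exact iSup_congr fun i => sup_sup_sup_comm _ _ _ _

theorem vertexHull_translate (U : EdgeFamily G ι K V) (g q : G) :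
    vertexHull s a b (fun q => U (q * g)) q = vertexHull s a b U (q * g) := by
  simp only [vertexHull, mul_assoc]

instance [Finite ι] [FiniteDimensional K V] (U : EdgeFamily G ι K V) (q : G) :
    FiniteDimensional K (vertexHull s a b U q) := by
  unfold vertexHull
  infer_instance

variable [Fintype G] [Fintype ι]

/-- The total dimension of the edge spaces minus the total dimension of the vertex spaces they
generate. -/
noncomputable def excess (U : EdgeFamily G ι K V) : ℤ :=
  ∑ q, ((∑ i, (finrank K (U q i) : ℤ)) - finrank K (vertexHull s a b U q))

theorem excess_translate (U : EdgeFamily G ι K V) (g : G) :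
    excess s a b (fun q => U (q * g)) = excess s a b U := by
  exact Fintype.sum_equiv (Equiv.mulRight g) _ _ fun q => by
    rw [vertexHull_translate, Equiv.coe_mulRight]

variable [FiniteDimensional K V]

theorem bddAbove_range_excess :
    BddAbove (Set.range (excess s a b : EdgeFamily G ι K V → ℤ)) := by
  refine ⟨∑ _q : G, ∑ _i : ι, (finrank K V : ℤ), ?_⟩
  rintro _ ⟨U, rfl⟩
  refine Finset.sum_le_sum fun q _ => (sub_le_self _ (Int.natCast_nonneg _)).trans ?_
  exact Finset.sum_le_sum fun i _ => Int.ofNat_le.2 (U q i).finrank_le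

theorem excess_add_excess_le (U U' : EdgeFamily G ι K V) :
    excess s a b U + excess s a b U' ≤ excess s a b (U ⊔ U') + excess s a b (U ⊓ U') := by
  simp only [excess, ← Finset.sum_add_distrib]
  refine Finset.sum_le_sum fun q _ => ?_
  have edges : ∑ i, (finrank K ((U ⊔ U') q i) : ℤ) + ∑ i, (finrank K ((U ⊓ U') q i) : ℤ) =
      ∑ i, (finrank K (U q i) : ℤ) + ∑ i, (finrank K (U' q i) : ℤ) := by
    simp only [← Finset.sum_add_distrib]
    exact Finset.sum_congr rfl fun i _ => mod_cast
      Submodule.finrank_sup_add_finrank_inf_eq (U q i) (U' q i)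
  have verts := Submodule.finrank_sup_add_finrank_inf_eq
    (vertexHull s a b U q) (vertexHull s a b U' q)
  have hull_inf : finrank K (vertexHull s a b (U ⊓ U') q) ≤
      finrank K ↥(vertexHull s a b U q ⊓ vertexHull s a b U' q) :=
    Submodule.finrank_mono <|
      le_inf (vertexHull_mono s a b q inf_le_left) (vertexHull_mono s a b q inf_le_right)
  rw [vertexHull_sup]
  omega

variable {a b}

theorem excess_const_nonpos
    (hinj : ∀ u : ι → V, ∑ i, (b i (u i) - a i (u i)) = 0 → u = 0) (U : ι → Submodule K V) :
    excess s a b (fun _ => U) ≤ 0 := by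
  refine Finset.sum_nonpos fun q _ => sub_nonpos.2 ?_
  let boundary : (∀ i, U i) →ₗ[K] W :=
    ∑ i, (b i - a i) ∘ₗ (U i).subtype ∘ₗ LinearMap.proj i
  have boundary_apply : ∀ u, boundary u = ∑ i, (b i (u i) - a i (u i)) := fun u => by
    simp [boundary]
  have boundary_mem : ∀ u, boundary u ∈ vertexHull s a b (fun _ => U) q := fun u => by
    rw [boundary_apply]
    exact Submodule.sum_mem _ fun i _ => Submodule.mem_iSup_of_mem i <| Submodule.sub_mem _
      (Submodule.mem_sup_right ⟨u i, (u i).2, rfl⟩) (Submodule.mem_sup_left ⟨u i, (u i).2, rfl⟩)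
  have boundary_injective : Function.Injective (boundary.codRestrict _ boundary_mem) := by
    rw [← LinearMap.ker_eq_bot, LinearMap.ker_codRestrict, LinearMap.ker_eq_bot']
    intro u hu
    have := hinj (fun i => u i) (by rw [← boundary_apply, hu])
    exact funext fun i => Subtype.ext (congrFun this i)
  have := LinearMap.finrank_le_finrank_of_injective boundary_injective
  rw [finrank_pi_fintype] at this
  exact_mod_cast this

-- The excess is supermodular, so it has a greatest maximizer, which must be translation-invariant.
theorem excess_nonpos
    (hinj : ∀ u : ι → V, ∑ i, (b i (u i) - a i (u i)) = 0 → u = 0) (U : EdgeFamily G ι K V) :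
    excess s a b U ≤ 0 := by
  have : WellFoundedGT (EdgeFamily G ι K V) :=
    have := wellFoundedGT_pi (ι := ι) (β := fun _ => Submodule K V)
    wellFoundedGT_pi
  obtain ⟨M, hM, hgreatest⟩ :=
    exists_isGreatest_maximizers (bddAbove_range_excess s a b) (excess_add_excess_le s a b)
  have translate_le : ∀ g : G, (fun q => M (q * g)) ≤ M := fun g =>
    hgreatest fun U' => (hM U').trans (excess_translate s a b M g).ge
  have const : M = fun _ => M 1 := funext fun q => le_antisymm
    (by simpa using translate_le q 1) (by simpa using translate_le q⁻¹ q)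
  exact (hM U).trans (const ▸ excess_const_nonpos s hinj (M 1))

variable {Y : Type*} [Fintype Y]

-- Every vertex `y` pulls the family back to the Cayley graph of `Equiv.Perm Y` along `q ↦ q y`;
-- the inequality is the average over `y` of the ones obtained there.
theorem sum_finrank_le_of_perm (σ : ι → Equiv.Perm Y)
    (hinj : ∀ u : ι → V, ∑ i, (b i (u i) - a i (u i)) = 0 → u = 0)
    (U : Y → ι → Submodule K V) (T : Y → Submodule K W) [∀ y, FiniteDimensional K (T y)]
    (ha : ∀ y i, (U y i).map (a i) ≤ T y) (hb : ∀ y i, (U y i).map (b i) ≤ T (σ i y)) :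
    ∑ y, ∑ i, finrank K (U y i) ≤ ∑ y, finrank K (T y) := by
  classical
  have pullback_le (y : Y) : ∑ q : Equiv.Perm Y, ∑ i, finrank K (U (q y) i) ≤
      ∑ q : Equiv.Perm Y, finrank K (T (q y)) := by
    have hull_le (q : Equiv.Perm Y) : vertexHull σ a b (fun q => U (q y)) q ≤ T (q y) :=
      iSup_le fun i => sup_le (ha _ _) (by simpa using hb ((σ i)⁻¹ (q y)) i)
    have excess_nonpos := excess_nonpos σ hinj fun q : Equiv.Perm Y => U (q y)
    rw [excess, Finset.sum_sub_distrib, sub_nonpos] at excess_nonpos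
    exact (mod_cast excess_nonpos : _ ≤ _).trans
      (Finset.sum_le_sum fun q _ => Submodule.finrank_mono (hull_le q))
  have sum_pullback (f : Y → ℕ) : ∑ y, ∑ q : Equiv.Perm Y, f (q y) =
      Fintype.card (Equiv.Perm Y) * ∑ y, f y := by
    rw [Finset.sum_comm, Finset.sum_congr rfl fun q _ => Equiv.sum_comp q f]
    simp
  refine Nat.le_of_mul_le_mul_left ?_ (Fintype.card_pos (α := Equiv.Perm Y))
  rw [← sum_pullback fun y => ∑ i, finrank K (U y i), ← sum_pullback]
  exact Finset.sum_le_sum fun y _ => pullback_le y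

end EdgeFamily

/-! ### Cochains on a Schreier graph -/

namespace FreeGroupAction

variable {ι Z A : Type*} [MulAction (FreeGroup ι) Z] [AddCommGroup A]

/-- The head of the edge with label `e.2` and tail `e.1` of the Schreier graph of an action of a
free group; edges are encoded as elements of `Z × ι`. -/
abbrev head (e : Z × ι) : Z := FreeGroup.of e.2 • e.1

/-- The permutation of `Z × A` lifting the action of the `i`-th generator on `Z` and shifting the
second coordinate by the value of `w` on the traversed edge. -/
def edgePerm (w : Z × ι → A) (i : ι) : Equiv.Perm (Z × A) where
  toFun p := (FreeGroup.of i • p.1, p.2 + w (p.1, i))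
  invFun p := ((FreeGroup.of i)⁻¹ • p.1, p.2 - w ((FreeGroup.of i)⁻¹ • p.1, i))
  left_inv p := by simp
  right_inv p := by simp

/-- The sum of the cochain `w` along the path from `z` to `g • z` in the Schreier graph spelled by
`g`, where backward steps count negatively. -/
def pathSum (w : Z × ι → A) (g : FreeGroup ι) (z : Z) : A :=
  (FreeGroup.lift (edgePerm w) g (z, 0)).2

section PathSum

variable (w : Z × ι → A)

theorem lift_edgePerm_apply (g : FreeGroup ι) (z : Z) (a : A) :
    FreeGroup.lift (edgePerm w) g (z, a) = (g • z, a + pathSum w g z) := by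
  suffices ∃ P : Z → A, ∀ z a, FreeGroup.lift (edgePerm w) g (z, a) = (g • z, a + P z) by
    obtain ⟨P, hP⟩ := this
    simp [pathSum, hP]
  induction g using FreeGroup.induction_on with
  | C1 => exact ⟨0, by simp⟩
  | of i => exact ⟨fun z => w (z, i), by simp [edgePerm]⟩
  | inv_of i _ =>
    refine ⟨fun z => -w ((FreeGroup.of i)⁻¹ • z, i), fun z a => ?_⟩
    rw [map_inv, FreeGroup.lift_apply_of, Equiv.Perm.inv_def]
    simp [edgePerm, sub_eq_add_neg]
  | mul g h hg hh =>
    obtain ⟨P, hP⟩ := hg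
    obtain ⟨P', hP'⟩ := hh
    exact ⟨fun z => P' z + P (h • z), by simp [hP, hP', mul_smul, add_assoc]⟩

@[simp]
theorem pathSum_one (z : Z) : pathSum w 1 z = 0 := by
  simp [pathSum]

@[simp]
theorem pathSum_of (i : ι) (z : Z) : pathSum w (FreeGroup.of i) z = w (z, i) := by
  simp [pathSum, edgePerm]

theorem pathSum_mul (g h : FreeGroup ι) (z : Z) :
    pathSum w (g * h) z = pathSum w g (h • z) + pathSum w h z := by
  rw [pathSum, map_mul, Equiv.Perm.mul_apply, lift_edgePerm_apply, lift_edgePerm_apply, zero_add,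
    add_comm]

theorem pathSum_inv (g : FreeGroup ι) (z : Z) :
    pathSum w g⁻¹ z = -pathSum w g (g⁻¹ • z) := by
  rw [eq_neg_iff_add_eq_zero, add_comm, ← pathSum_mul, mul_inv_cancel, pathSum_one]

variable {w}

theorem eq_pathSum {P : FreeGroup ι → Z → A} (of_eq : ∀ i z, P (FreeGroup.of i) z = w (z, i))
    (mul_eq : ∀ g h z, P (g * h) z = P g (h • z) + P h z) (g : FreeGroup ι) (z : Z) :
    P g z = pathSum w g z := by
  have one_eq (z : Z) : P 1 z = 0 := by simpa using mul_eq 1 1 z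
  induction g using FreeGroup.induction_on generalizing z with
  | C1 => rw [one_eq, pathSum_one]
  | of i => rw [of_eq, pathSum_of]
  | inv_of i ih =>
    rw [pathSum_inv, ← ih, eq_neg_iff_add_eq_zero, add_comm, ← mul_eq, mul_inv_cancel, one_eq]
  | mul g h hg hh => rw [mul_eq, pathSum_mul, hg, hh]

variable (w)

theorem pathSum_comp {X : Type*} [MulAction (FreeGroup ι) X] (φ : X →[FreeGroup ι] Z)
    (g : FreeGroup ι) (x : X) :
    pathSum (fun e : X × ι => w (φ e.1, e.2)) g x = pathSum w g (φ x) :=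
  .symm <| eq_pathSum (P := fun g x => pathSum w g (φ x)) (by simp) (by simp [pathSum_mul]) g x

/-- `pathSum` as a linear map in the cochain. -/
def pathSumLinear (𝕜 : Type*) [Semiring 𝕜] [Module 𝕜 A] (g : FreeGroup ι) (z : Z) :
    (Z × ι → A) →ₗ[𝕜] A where
  toFun w := pathSum w g z
  map_add' w w' := .symm <| eq_pathSum (P := fun g z => pathSum w g z + pathSum w' g z)
    (by simp) (fun g h z => by rw [pathSum_mul, pathSum_mul, add_add_add_comm]) g z
  map_smul' c w := .symm <| eq_pathSum (P := fun g z => c • pathSum w g z)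
    (by simp) (fun g h z => by rw [pathSum_mul, smul_add]) g z

/-- The character of the stabilizer of `z₀` sending a closed path at `z₀` to the sum of `w`
along it. -/
def periodHom (z₀ : Z) : MulAction.stabilizer (FreeGroup ι) z₀ →* Multiplicative A :=
  MonoidHom.mk' (fun g => .ofAdd (pathSum w g z₀)) fun g h => by
    rw [Subgroup.coe_mul, pathSum_mul, MulAction.mem_stabilizer_iff.1 h.2, ofAdd_add]

end PathSum

/-- The coboundary of a function on the vertices of the Schreier graph. -/
def coboundary (f : Z → A) (e : Z × ι) : A := f (head e) - f e.1

theorem pathSum_coboundary (f : Z → A) (g : FreeGroup ι) (z : Z) :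
    pathSum (coboundary f) g z = f (g • z) - f z :=
  .symm <| eq_pathSum (P := fun g z => f (g • z) - f z) (by simp [coboundary])
    (by simp [mul_smul]) g z

theorem exists_eq_coboundary [MulAction.IsPretransitive (FreeGroup ι) Z] {w : Z × ι → A} (z₀ : Z)
    (hw : ∀ g ∈ MulAction.stabilizer (FreeGroup ι) z₀, pathSum w g z₀ = 0) :
    ∃ f : Z → A, w = coboundary f := by
  choose t ht using MulAction.exists_smul_eq (FreeGroup ι) z₀
  have path_independent (g : FreeGroup ι) : pathSum w (t (g • z₀)) z₀ = pathSum w g z₀ := by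
    have closed : (g⁻¹ * t (g • z₀)) • z₀ = z₀ := by rw [mul_smul, ht, inv_smul_smul]
    rw [← mul_inv_cancel_left g (t (g • z₀)), pathSum_mul, closed, hw _ closed, add_zero]
  refine ⟨fun z => pathSum w (t z) z₀, funext fun ⟨z, i⟩ => ?_⟩
  have := path_independent (FreeGroup.of i * t z)
  rw [mul_smul, ht, pathSum_mul, ht, pathSum_of] at this
  rw [coboundary, this, add_sub_cancel_right]

theorem exists_periodHom_eq {z₀ : Z}
    (χ : MulAction.stabilizer (FreeGroup ι) z₀ →* Multiplicative A) :
    ∃ w : Z × ι → A, periodHom w z₀ = χ := by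
  let orbitMap : FreeGroup ι →[FreeGroup ι] Z := ⟨(· • z₀), fun g h => mul_smul g h z₀⟩
  let t : Z → FreeGroup ι := Function.invFun orbitMap
  have ht (g : FreeGroup ι) : t (g • z₀) • z₀ = g • z₀ :=
    Function.invFun_eq (f := orbitMap) ⟨g, rfl⟩
  have closed (g : FreeGroup ι) : (t (g • z₀))⁻¹ * g ∈ MulAction.stabilizer (FreeGroup ι) z₀ := by
    rw [MulAction.mem_stabilizer_iff, mul_smul, inv_smul_eq_iff, ht]
  let f : FreeGroup ι → A := fun g => (χ ⟨_, closed g⟩).toAdd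
  have f_mul (g : FreeGroup ι) (s : MulAction.stabilizer (FreeGroup ι) z₀) :
      f (g * s) = f g + (χ s).toAdd := by
    have : (⟨_, closed (g * s)⟩ : MulAction.stabilizer (FreeGroup ι) z₀) = ⟨_, closed g⟩ * s :=
      Subtype.ext (by simp [mul_smul, MulAction.mem_stabilizer_iff.1 s.2, mul_assoc])
    simp only [f, this, map_mul, toAdd_mul]
  let w : Z × ι → A := fun e => f (FreeGroup.of e.2 * t e.1) - f (t e.1)
  have w_orbitMap : (fun e : FreeGroup ι × ι => w (orbitMap e.1, e.2)) = coboundary f := by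
    ext ⟨h, i⟩
    have h_eq : h = t (h • z₀) * (⟨_, closed h⟩ : MulAction.stabilizer (FreeGroup ι) z₀) := by simp
    change f (FreeGroup.of i * t (h • z₀)) - f (t (h • z₀)) = f (FreeGroup.of i * h) - f h
    conv_rhs => rw [h_eq, ← mul_assoc, f_mul, f_mul, add_sub_add_right_eq_sub]
  refine ⟨w, MonoidHom.ext fun g => ?_⟩
  have orbitMap_one : orbitMap 1 = z₀ := one_smul _ z₀
  calc periodHom w z₀ g = .ofAdd (pathSum w g (orbitMap 1)) := by rw [orbitMap_one]; rfl
    _ = .ofAdd (f (1 * g) - f 1) := by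
      rw [← pathSum_comp, w_orbitMap, pathSum_coboundary, smul_eq_mul, mul_one, one_mul]
    _ = χ g := by rw [f_mul, add_sub_cancel_left, ofAdd_toAdd]

section Carries

variable {ι Z A : Type*} [MulAction (FreeGroup ι) Z] [AddCommGroup A]

/-- `Carries E g z` means that `g` can be spelled by a path from `z` to `g • z` with edges in `E`;
the path need not be reduced. -/
inductive Carries (E : Set (Z × ι)) : FreeGroup ι → Z → Prop
  | one (z : Z) : Carries E 1 z
  | of {e : Z × ι} (he : e ∈ E) : Carries E (FreeGroup.of e.2) e.1
  | inv_of {e : Z × ι} (he : e ∈ E) : Carries E (FreeGroup.of e.2)⁻¹ (head e)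
  | mul {g h : FreeGroup ι} {z : Z} (hg : Carries E g (h • z)) (hh : Carries E h z) :
    Carries E (g * h) z

variable {E : Set (Z × ι)} {g : FreeGroup ι} {z : Z}

theorem Carries.mono {E' : Set (Z × ι)} (hE : E ⊆ E') (h : Carries E g z) : Carries E' g z := by
  induction h with
  | one z => exact .one z
  | of he => exact .of (hE he)
  | inv_of he => exact .inv_of (hE he)
  | mul _ _ hg hh => exact .mul hg hh

theorem Carries.pathSum_congr {w w' : Z × ι → A} (h : Carries E g z) (hw : Set.EqOn w w' E) :
    pathSum w g z = pathSum w' g z := by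
  induction h with
  | one z => simp
  | of he => simp [hw he]
  | inv_of he => simp [pathSum_inv, hw he]
  | mul _ _ hg hh => rw [pathSum_mul, pathSum_mul, hg, hh]

theorem Carries.apply_smul_eq {f : Z → A} (h : Carries E g z)
    (hf : ∀ e ∈ E, coboundary f e = 0) : f (g • z) = f z := by
  rw [← sub_eq_zero, ← pathSum_coboundary, h.pathSum_congr (w' := 0) hf]
  exact map_zero (pathSumLinear ℤ g z)

end Carries

/-! ### Finite subgraphs -/

/-- A finite subgraph of the Schreier graph of an action of a free group. -/
structure FiniteSubgraph (ι Z : Type*) [MulAction (FreeGroup ι) Z] where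
  verts : Finset Z
  /-- The edges of the subgraph, encoded by tail and label. -/
  edges : Finset (Z × ι)
  tail_mem {e : Z × ι} (he : e ∈ edges) : e.1 ∈ verts
  head_mem {e : Z × ι} (he : e ∈ edges) : head e ∈ verts

namespace FiniteSubgraph

open Module

variable {ι Z : Type*} [MulAction (FreeGroup ι) Z] (Γ : FiniteSubgraph ι Z)

/-- The number of edges minus the number of vertices, that is, minus the Euler characteristic. -/
def excess : ℤ := Γ.edges.card - Γ.verts.card

section Cochains

variable (𝕜 : Type*) [Field 𝕜]

/-- The coboundary map on the cochains of a finite subgraph. -/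
def coboundaryLinear : (Γ.verts → 𝕜) →ₗ[𝕜] (Γ.edges → 𝕜) :=
  LinearMap.funLeft 𝕜 𝕜 (fun e => ⟨head e.1, Γ.head_mem e.2⟩) -
    LinearMap.funLeft 𝕜 𝕜 (fun e => ⟨e.1.1, Γ.tail_mem e.2⟩)

variable {𝕜} in
theorem coboundaryLinear_restrict (f : Z → 𝕜) :
    Γ.coboundaryLinear 𝕜 (fun v => f v) = fun e : Γ.edges => coboundary f e.1 :=
  rfl

/-- The sums of a cochain, extended by zero, along the closed paths at `z₀` spelled by a family of
elements of the stabilizer of `z₀`. -/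
noncomputable def periods {J : Type*} (κ : J → FreeGroup ι) (z₀ : Z) :
    (Γ.edges → 𝕜) →ₗ[𝕜] (J → 𝕜) :=
  LinearMap.pi fun j =>
    pathSumLinear 𝕜 (κ j) z₀ ∘ₗ Function.ExtendByZero.linearMap 𝕜 Subtype.val

variable {J : Type*} {z₀ : Z}

theorem ker_periods_le_range_coboundaryLinear [MulAction.IsPretransitive (FreeGroup ι) Z]
    {φ : FreeGroup J →* FreeGroup ι} (hφ : φ.range = MulAction.stabilizer (FreeGroup ι) z₀) :
    LinearMap.ker (Γ.periods 𝕜 (fun j => φ (.of j)) z₀) ≤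
      LinearMap.range (Γ.coboundaryLinear 𝕜) := by
  intro w hw
  let w' := Function.ExtendByZero.linearMap 𝕜 Subtype.val w
  have periods_eq_zero :
      (periodHom w' z₀).comp (φ.codRestrict _ fun x => hφ.le ⟨x, rfl⟩) = 1 :=
    FreeGroup.ext_hom _ _ fun j => congrArg Multiplicative.ofAdd (congrFun hw j)
  obtain ⟨f, hf⟩ := exists_eq_coboundary (w := w') z₀ fun g hg => by
    obtain ⟨x, rfl⟩ := hφ.ge hg
    exact congrArg Multiplicative.toAdd (DFunLike.congr_fun periods_eq_zero x)
  refine ⟨fun v => f v, ?_⟩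
  rw [coboundaryLinear_restrict, ← hf]
  exact funext fun e => Subtype.val_injective.extend_apply _ _ e

theorem finrank_ker_coboundaryLinear_pos (hΓ : Γ.verts.Nonempty) :
    0 < finrank 𝕜 (LinearMap.ker (Γ.coboundaryLinear 𝕜)) := by
  have := hΓ.to_subtype
  have one_mem : (1 : Γ.verts → 𝕜) ∈ LinearMap.ker (Γ.coboundaryLinear 𝕜) := sub_self 1
  exact finrank_pos_iff.2
    ⟨⟨⟨1, one_mem⟩, 0, fun h => one_ne_zero (congrArg Subtype.val h)⟩⟩

end Cochains

theorem excess_lt_card [MulAction.IsPretransitive (FreeGroup ι) Z] {J : Type*} [Fintype J] {z₀ : Z}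
    {φ : FreeGroup J →* FreeGroup ι} (hφ : φ.range = MulAction.stabilizer (FreeGroup ι) z₀)
    (hΓ : Γ.verts.Nonempty) : Γ.excess < Fintype.card J := by
  have ker_le := Submodule.finrank_mono (Γ.ker_periods_le_range_coboundaryLinear ℚ hφ)
  have ker_pos := Γ.finrank_ker_coboundaryLinear_pos ℚ hΓ
  have range_le := (LinearMap.range (Γ.periods ℚ (fun j => φ (.of j)) z₀)).finrank_le
  have periods_rank := (Γ.periods ℚ (fun j => φ (.of j)) z₀).finrank_range_add_finrank_ker
  have coboundary_rank := (Γ.coboundaryLinear ℚ).finrank_range_add_finrank_ker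
  simp only [finrank_fintype_fun_eq_card, Fintype.card_coe] at *
  unfold excess
  omega

/-- Every vertex of the subgraph can be reached from `z` within the subgraph. -/
def IsConnectedAt (z : Z) : Prop :=
  z ∈ Γ.verts ∧ ∀ v ∈ Γ.verts, ∃ g : FreeGroup ι, Carries (Γ.edges : Set (Z × ι)) g z ∧ g • z = v

section Union

variable [DecidableEq ι] [DecidableEq Z]

instance : Max (FiniteSubgraph ι Z) where
  max Γ Δ :=
    { verts := Γ.verts ∪ Δ.verts
      edges := Γ.edges ∪ Δ.edges
      tail_mem := fun he => (Finset.mem_union.1 he).elim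
        (fun he => Finset.mem_union_left _ (Γ.tail_mem he))
        fun he => Finset.mem_union_right _ (Δ.tail_mem he)
      head_mem := fun he => (Finset.mem_union.1 he).elim
        (fun he => Finset.mem_union_left _ (Γ.head_mem he))
        fun he => Finset.mem_union_right _ (Δ.head_mem he) }

variable {Γ} {Δ : FiniteSubgraph ι Z} {g : FreeGroup ι} {z : Z}

theorem carries_sup_left (h : Carries (Γ.edges : Set (Z × ι)) g z) :
    Carries ((Γ ⊔ Δ).edges : Set (Z × ι)) g z :=
  h.mono (Finset.coe_subset.2 Finset.subset_union_left)

theorem carries_sup_right (h : Carries (Δ.edges : Set (Z × ι)) g z) :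
    Carries ((Γ ⊔ Δ).edges : Set (Z × ι)) g z :=
  h.mono (Finset.coe_subset.2 Finset.subset_union_right)

theorem IsConnectedAt.sup (hΓ : Γ.IsConnectedAt z) (hg : Carries (Γ.edges : Set (Z × ι)) g z)
    (hΔ : Δ.IsConnectedAt (g • z)) : (Γ ⊔ Δ).IsConnectedAt z := by
  refine ⟨Finset.mem_union_left _ hΓ.1, fun v hv => ?_⟩
  rcases Finset.mem_union.1 hv with hv | hv
  · obtain ⟨h, hh, rfl⟩ := hΓ.2 v hv
    exact ⟨h, carries_sup_left hh, rfl⟩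
  · obtain ⟨h, hh, rfl⟩ := hΔ.2 v hv
    exact ⟨h * g, .mul (carries_sup_right hh) (carries_sup_left hg), mul_smul h g z⟩

end Union

/-- The subgraph with a single edge. -/
def ofEdge [DecidableEq Z] (e : Z × ι) : FiniteSubgraph ι Z where
  verts := {e.1, head e}
  edges := {e}
  tail_mem he := by simp [Finset.mem_singleton.1 he]
  head_mem he := by simp [Finset.mem_singleton.1 he]

theorem isConnectedAt_ofEdge_tail [DecidableEq Z] (e : Z × ι) : (ofEdge e).IsConnectedAt e.1 := by
  refine ⟨Finset.mem_insert_self _ _, Finset.forall_mem_insert _ _ _ |>.2 ⟨?_, ?_⟩⟩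
  · exact ⟨1, .one _, one_smul _ _⟩
  · simpa using ⟨_, .of (Finset.mem_singleton_self e), rfl⟩

theorem isConnectedAt_ofEdge_head [DecidableEq Z] (e : Z × ι) :
    (ofEdge e).IsConnectedAt (head e) := by
  refine ⟨by simp [ofEdge], Finset.forall_mem_insert _ _ _ |>.2 ⟨?_, ?_⟩⟩
  · exact ⟨_, .inv_of (Finset.mem_singleton_self e), inv_smul_smul _ _⟩
  · simpa using ⟨1, .one _, one_smul _ _⟩

theorem exists_isConnectedAt_carries (g : FreeGroup ι) (z : Z) :
    ∃ Γ : FiniteSubgraph ι Z, Γ.IsConnectedAt z ∧ Carries (Γ.edges : Set (Z × ι)) g z := by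
  classical
  induction g using FreeGroup.induction_on generalizing z with
  | C1 => exact ⟨⟨{z}, ∅, by simp, by simp⟩, ⟨by simp, by simpa using ⟨1, .one z, one_smul _ z⟩⟩,
      .one z⟩
  | of i => exact ⟨ofEdge (z, i), isConnectedAt_ofEdge_tail _, .of (Finset.mem_singleton_self _)⟩
  | inv_of i _ =>
    obtain ⟨z, rfl⟩ := MulAction.surjective (FreeGroup.of i) z
    exact ⟨ofEdge (z, i), isConnectedAt_ofEdge_head _, .inv_of (Finset.mem_singleton_self (z, i))⟩
  | mul g h hg hh =>
    obtain ⟨Γ, hΓ, carries_h⟩ := hh z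
    obtain ⟨Δ, hΔ, carries_g⟩ := hg (h • z)
    exact ⟨Γ ⊔ Δ, hΓ.sup carries_h hΔ,
      .mul (carries_sup_right carries_g) (carries_sup_left carries_h)⟩

theorem exists_isConnectedAt_forall_carries {J : Type*} [Finite J] (κ : J → FreeGroup ι) (z : Z) :
    ∃ Γ : FiniteSubgraph ι Z,
      Γ.IsConnectedAt z ∧ ∀ j, Carries (Γ.edges : Set (Z × ι)) (κ j) z := by
  classical
  cases nonempty_fintype J
  suffices ∀ s : Finset J, ∃ Γ : FiniteSubgraph ι Z,
      Γ.IsConnectedAt z ∧ ∀ j ∈ s, Carries (Γ.edges : Set (Z × ι)) (κ j) z by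
    simpa using this Finset.univ
  intro s
  induction s using Finset.induction_on with
  | empty =>
    obtain ⟨Γ, hΓ, -⟩ := exists_isConnectedAt_carries (1 : FreeGroup ι) z
    exact ⟨Γ, hΓ, by simp⟩
  | insert j s _ ih =>
    obtain ⟨Γ, hΓ, carries_s⟩ := ih
    obtain ⟨Δ, hΔ, carries_j⟩ := exists_isConnectedAt_carries (κ j) z
    refine ⟨Γ ⊔ Δ, hΓ.sup (.one z) (by rwa [one_smul]), Finset.forall_mem_insert _ _ _ |>.2 ?_⟩
    exact ⟨carries_sup_right carries_j, fun i hi => carries_sup_left (carries_s i hi)⟩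

section Connected

variable {Γ} {𝕜 : Type*} [Field 𝕜] {J : Type*} {κ : J → FreeGroup ι} {z₀ : Z}

theorem finrank_ker_coboundaryLinear_le_one (hΓ : Γ.IsConnectedAt z₀) :
    finrank 𝕜 (LinearMap.ker (Γ.coboundaryLinear 𝕜)) ≤ 1 := by
  suffices LinearMap.ker (Γ.coboundaryLinear 𝕜) ≤ Submodule.span 𝕜 {1} from
    (Submodule.finrank_mono this).trans (by simpa using finrank_span_le_card (R := 𝕜) {1})
  intro f hf
  obtain ⟨f, rfl⟩ := Subtype.val_injective.surjective_comp_right f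
  refine Submodule.mem_span_singleton.2 ⟨f z₀, funext fun ⟨v, hv⟩ => ?_⟩
  obtain ⟨g, hg, rfl⟩ := hΓ.2 v hv
  simpa using (hg.apply_smul_eq fun e he => congrFun hf ⟨e, he⟩).symm

theorem periods_restrict (hκ : ∀ j, Carries (Γ.edges : Set (Z × ι)) (κ j) z₀) (w : Z × ι → 𝕜) :
    Γ.periods 𝕜 κ z₀ (fun e => w e) = fun j => pathSum w (κ j) z₀ :=
  funext fun j => (hκ j).pathSum_congr fun e he =>
    Subtype.val_injective.extend_apply (fun e : Γ.edges => w e) 0 ⟨e, he⟩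

theorem range_coboundaryLinear_le_ker_periods
    (hκ : ∀ j, Carries (Γ.edges : Set (Z × ι)) (κ j) z₀)
    (hstab : ∀ j, κ j ∈ MulAction.stabilizer (FreeGroup ι) z₀) :
    LinearMap.range (Γ.coboundaryLinear 𝕜) ≤ LinearMap.ker (Γ.periods 𝕜 κ z₀) := by
  rintro _ ⟨f, rfl⟩
  obtain ⟨f, rfl⟩ := Subtype.val_injective.surjective_comp_right f
  refine (periods_restrict hκ (coboundary f)).trans (funext fun j => ?_)
  rw [pathSum_coboundary, MulAction.mem_stabilizer_iff.1 (hstab j), sub_self, Pi.zero_apply]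

theorem card_le_excess_add_one [Fintype J] [DecidableEq J] (hΓ : Γ.IsConnectedAt z₀)
    (hκ : ∀ j, Carries (Γ.edges : Set (Z × ι)) (κ j) z₀)
    (hstab : ∀ j, κ j ∈ MulAction.stabilizer (FreeGroup ι) z₀) (w : J → Z × ι → 𝕜)
    (hw : ∀ i, (fun j => pathSum (w i) (κ j) z₀) = Pi.single i 1) :
    Fintype.card J ≤ Γ.excess + 1 := by
  have periods_surjective : LinearMap.range (Γ.periods 𝕜 κ z₀) = ⊤ := by
    rw [eq_top_iff, ← (Pi.basisFun 𝕜 J).span_eq, Submodule.span_le]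
    rintro _ ⟨i, rfl⟩
    exact ⟨fun e => w i e, by rw [periods_restrict hκ, hw, Pi.basisFun_apply]⟩
  have range_le := Submodule.finrank_mono
    (range_coboundaryLinear_le_ker_periods (𝕜 := 𝕜) hκ hstab)
  have ker_le := finrank_ker_coboundaryLinear_le_one (𝕜 := 𝕜) hΓ
  have periods_rank := (Γ.periods 𝕜 κ z₀).finrank_range_add_finrank_ker
  have coboundary_rank := (Γ.coboundaryLinear 𝕜).finrank_range_add_finrank_ker
  rw [periods_surjective, finrank_top] at periods_rank
  simp only [finrank_fintype_fun_eq_card, Fintype.card_coe] at *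
  unfold excess
  omega

end Connected

end FiniteSubgraph

section Rank

open FiniteSubgraph

theorem hasFreeRank_card_generators {G : Type*} [Group G] (K : Subgroup G) [IsFreeGroup K]
    [Fintype (IsFreeGroup.Generators K)] :
    HasFreeRank K (Fintype.card (IsFreeGroup.Generators K)) := by
  let e : FreeGroup (Fin (Fintype.card (IsFreeGroup.Generators K))) ≃* K :=
    (FreeGroup.freeGroupCongr (Fintype.equivFin _).symm).trans (IsFreeGroup.mulEquiv K)
  refine ⟨K.subtype.comp e.toMonoidHom, K.subtype_injective.comp e.injective, ?_⟩
  rw [MonoidHom.range_comp, MonoidHom.range_eq_top.2 e.surjective, ← MonoidHom.range_eq_map,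
    K.range_subtype]

variable {ι Z : Type*} [MulAction (FreeGroup ι) Z] {m : ℕ}

theorem FiniteSubgraph.excess_lt_of_hasFreeRank [MulAction.IsPretransitive (FreeGroup ι) Z] {z₀ : Z}
    (hz₀ : HasFreeRank (MulAction.stabilizer (FreeGroup ι) z₀) m) (Γ : FiniteSubgraph ι Z)
    (hΓ : Γ.verts.Nonempty) : Γ.excess < m := by
  obtain ⟨φ, -, hφ⟩ := hz₀
  simpa using Γ.excess_lt_card hφ hΓ

theorem exists_hasFreeRank_stabilizer (z₀ : Z)
    (hexcess : ∀ Γ : FiniteSubgraph ι Z, Γ.verts.Nonempty → Γ.excess < m) :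
    ∃ j ≤ m, HasFreeRank (MulAction.stabilizer (FreeGroup ι) z₀) j := by
  classical
  let K := MulAction.stabilizer (FreeGroup ι) z₀
  let dual (x : IsFreeGroup.Generators K) : K →* Multiplicative ℚ :=
    IsFreeGroup.lift fun y => .ofAdd (if y = x then 1 else 0)
  choose w hw using fun x => exists_periodHom_eq (dual x)
  have card_le (s : Finset (IsFreeGroup.Generators K)) : s.card ≤ m := by
    let κ (x : s) : K := IsFreeGroup.of x.1
    obtain ⟨Γ, hΓ, carries⟩ :=
      exists_isConnectedAt_forall_carries (fun x => (κ x : FreeGroup ι)) z₀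
    have pathSum_κ (x y : s) : pathSum (w x) (κ y) z₀ = (Pi.single x 1 : s → ℚ) y :=
      calc pathSum (w x) (κ y) z₀
          = (dual x (κ y)).toAdd := congrArg Multiplicative.toAdd (DFunLike.congr_fun (hw x) (κ y))
        _ = if y.1 = x.1 then 1 else 0 := by simp [dual, κ]
        _ = (Pi.single x 1 : s → ℚ) y := by simp only [Pi.single_apply, Subtype.ext_iff]
    have := card_le_excess_add_one hΓ carries (fun x => (κ x).2) (fun x => w x)
      fun x => funext (pathSum_κ x)
    have := hexcess Γ ⟨z₀, hΓ.1⟩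
    rw [Fintype.card_coe] at *
    omega
  have := fintypeOfFinsetCardLe m card_le
  exact ⟨_, card_le Finset.univ, hasFreeRank_card_generators K⟩

end Rank

section Retract

open Module

variable {ι X A 𝕜 : Type*} [MulAction (FreeGroup ι) X] [MulAction.IsPretransitive (FreeGroup ι) X]
  {x₀ : X}

theorem exists_eq_const_add_coboundary [AddCommGroup A]
    (hx₀ : IsRetract (MulAction.stabilizer (FreeGroup ι) x₀)) (w : X × ι → A) :
    ∃ (c : ι → A) (f : X → A), ∀ e, w e = c e.2 + coboundary f e := by
  obtain ⟨r, hrange, hfix⟩ := hx₀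
  have smul_x₀ (g : FreeGroup ι) : r g • x₀ = x₀ := hrange.le ⟨g, rfl⟩
  let c (i : ι) : A := pathSum w (r (FreeGroup.of i)) x₀
  have pathSum_sub (g : FreeGroup ι) (x : X) :
      pathSum w g x - pathSum w (r g) x₀ = pathSum (fun e => w e - c e.2) g x :=
    eq_pathSum (P := fun g x => pathSum w g x - pathSum w (r g) x₀) (by simp [c])
      (fun g h x => by simp only [map_mul, pathSum_mul, smul_x₀]; abel) g x
  obtain ⟨f, hf⟩ := exists_eq_coboundary x₀ fun g hg => by
    rw [← pathSum_sub, hfix g hg, sub_self]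
  exact ⟨c, f, fun e => by rw [← hf, add_sub_cancel]⟩

variable [Field 𝕜]

theorem eq_zero_of_boundary_eq_zero
    (hx₀ : IsRetract (MulAction.stabilizer (FreeGroup ι) x₀)) {u : ι →₀ X →₀ 𝕜}
    (hsum : ∀ i, Finsupp.linearCombination 𝕜 (fun _ => (1 : 𝕜)) (u i) = 0)
    (hu : (u.sum fun i v => v.mapDomain (FreeGroup.of i • ·) - v) = 0) : u = 0 := by
  classical
  have pairing_eq_zero (w : X × ι → 𝕜) :
      (u.sum fun i v => Finsupp.linearCombination 𝕜 (fun x => w (x, i)) v) = 0 := by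
    obtain ⟨c, f, hw⟩ := exists_eq_const_add_coboundary hx₀ w
    rw [← map_zero (Finsupp.linearCombination 𝕜 f), ← hu, map_finsuppSum]
    refine Finset.sum_congr rfl fun i _ => ?_
    have hw_i : (fun x => w (x, i)) =
        c i • (fun _ => (1 : 𝕜)) + (f ∘ (FreeGroup.of i • ·) - f) :=
      funext fun x => by simp [hw, coboundary]
    calc Finsupp.linearCombination 𝕜 (fun x => w (x, i)) (u i)
        = Finsupp.bilinearCombination 𝕜 𝕜
            (c i • (fun _ => (1 : 𝕜)) + (f ∘ (FreeGroup.of i • ·) - f)) (u i) := by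
          rw [hw_i, Finsupp.bilinearCombination_apply]
      _ = Finsupp.linearCombination 𝕜 f ((u i).mapDomain (FreeGroup.of i • ·) - u i) := by
          rw [map_add, map_smul, map_sub]
          simp [hsum, Finsupp.linearCombination_mapDomain]
  ext i x
  have := pairing_eq_zero (Pi.single (x, i) 1)
  rw [Finsupp.sum_eq_single i] at this
  · simpa [Finsupp.linearCombination_apply, Finsupp.sum, Pi.single_apply] using this
  · intro j _ hj
    simp [Finsupp.linearCombination_apply, hj]
  · simp

end Retract

namespace FiniteSubgraph

open Module

variable {ι Y : Type*} [MulAction (FreeGroup ι) Y]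

theorem exists_perm_verts (Γ : FiniteSubgraph ι Y) (i : ι) :
    ∃ σ : Equiv.Perm Γ.verts, ∀ v : Γ.verts, (v.1, i) ∈ Γ.edges → (σ v : Y) = head (v.1, i) :=
  Set.MapsTo.exists_equiv_extend_of_card_eq (s := {v | (v.1, i) ∈ Γ.edges})
    (f := fun v => head (v.1, i)) (Fintype.card_coe _) (fun _ hv => Γ.head_mem hv)
    fun _ _ _ _ h => Subtype.ext (MulAction.injective _ h)

theorem sum_finrank_le {K V W : Type*} [DivisionRing K] [AddCommGroup V] [Module K V]
    [FiniteDimensional K V] [AddCommGroup W] [Module K W] (Γ : FiniteSubgraph ι Y)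
    {a b : ι → V →ₗ[K] W}
    (hinj : ∀ u : ι →₀ V, (u.sum fun i v => b i v - a i v) = 0 → u = 0)
    (U : Y × ι → Submodule K V) (T : Y → Submodule K W) [∀ y, FiniteDimensional K (T y)]
    (ha : ∀ e ∈ Γ.edges, (U e).map (a e.2) ≤ T e.1)
    (hb : ∀ e ∈ Γ.edges, (U e).map (b e.2) ≤ T (head e)) :
    ∑ e ∈ Γ.edges, finrank K (U e) ≤ ∑ v ∈ Γ.verts, finrank K (T v) := by
  classical
  choose σ hσ using Γ.exists_perm_verts
  let labels : Finset ι := Γ.edges.image Prod.snd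
  let U' (e : Y × ι) : Submodule K V := if e ∈ Γ.edges then U e else ⊥
  have U'_of_mem {e : Y × ι} (he : e ∈ Γ.edges) : U' e = U e := if_pos he
  have U'_of_notMem {e : Y × ι} (he : e ∉ Γ.edges) : U' e = ⊥ := if_neg he
  have hinj_labels (u : labels → V) (hu : ∑ i : labels, (b i (u i) - a i (u i)) = 0) : u = 0 := by
    let u' : labels →₀ V := Finsupp.equivFunOnFinite.symm u
    have := hinj (u'.mapDomain Subtype.val) <| by
      rw [Finsupp.sum_mapDomain_index_inj Subtype.val_injective, Finsupp.sum_fintype _ _ (by simp)]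
      exact hu
    exact congrArg Finsupp.equivFunOnFinite <|
      Finsupp.mapDomain_injective Subtype.val_injective (this.trans Finsupp.mapDomain_zero.symm)
  have edges_subset : Γ.edges ⊆ Γ.verts ×ˢ labels := fun e he =>
    Finset.mem_product.2 ⟨Γ.tail_mem he, Finset.mem_image_of_mem _ he⟩
  calc ∑ e ∈ Γ.edges, finrank K (U e)
      = ∑ e ∈ Γ.verts ×ˢ labels, finrank K (U' e) := by
        rw [← Finset.sum_subset edges_subset fun e _ he => by rw [U'_of_notMem he, finrank_bot]]
        exact Finset.sum_congr rfl fun e he => by rw [U'_of_mem he]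
    _ = ∑ v : Γ.verts, ∑ i : labels, finrank K (U' (v, i)) := by
        rw [Finset.sum_product, ← Finset.sum_coe_sort]
        exact Finset.sum_congr rfl fun v _ => (Finset.sum_coe_sort labels _).symm
    _ ≤ ∑ v : Γ.verts, finrank K (T v) := by
        refine EdgeFamily.sum_finrank_le_of_perm (fun i : labels => σ i) hinj_labels
          (fun v i => U' (v, i)) (fun v => T v) (fun v i => ?_) fun v i => ?_
        all_goals by_cases he : (v.1, i.1) ∈ Γ.edges
        · exact U'_of_mem he ▸ ha _ he
        · simp [U'_of_notMem he]
        · exact U'_of_mem he ▸ hσ i v he ▸ hb _ he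
        · simp [U'_of_notMem he]
    _ = ∑ v ∈ Γ.verts, finrank K (T v) := Finset.sum_coe_sort _ fun v => finrank K (T v)

theorem sum_finrank_le_of_le {K W : Type*} [DivisionRing K] [AddCommGroup W] [Module K W]
    (Γ : FiniteSubgraph ι Y) (V : Submodule K W) [FiniteDimensional K V] {b : ι → W →ₗ[K] W}
    (hinj : ∀ u : ι →₀ W, (∀ i, u i ∈ V) → (u.sum fun i v => b i v - v) = 0 → u = 0)
    (U : Y × ι → Submodule K W) (T : Y → Submodule K W) [∀ y, FiniteDimensional K (T y)]
    (hV : ∀ e ∈ Γ.edges, U e ≤ V) (htail : ∀ e ∈ Γ.edges, U e ≤ T e.1)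
    (hhead : ∀ e ∈ Γ.edges, (U e).map (b e.2) ≤ T (head e)) :
    ∑ e ∈ Γ.edges, finrank K (U e) ≤ ∑ v ∈ Γ.verts, finrank K (T v) := by
  have map_comap {e : Y × ι} (he : e ∈ Γ.edges) :
      ((U e).comap V.subtype).map V.subtype = U e := by
    rw [Submodule.map_comap_subtype, inf_eq_right.2 (hV e he)]
  have hinj_V (u : ι →₀ V) (hu : (u.sum fun i v => (b i ∘ₗ V.subtype) v - V.subtype v) = 0) :
      u = 0 := by
    have := hinj (u.mapRange V.subtype (map_zero _)) (fun i => (u i).2)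
      (by rwa [Finsupp.sum_mapRange_index (by simp)])
    exact Finsupp.mapRange_injective _ (map_zero _) V.subtype_injective
      (this.trans Finsupp.mapRange_zero.symm)
  calc ∑ e ∈ Γ.edges, finrank K (U e)
      = ∑ e ∈ Γ.edges, finrank K ((U e).comap V.subtype) :=
        Finset.sum_congr rfl fun e he => (Submodule.comapSubtypeEquivOfLe (hV e he)).finrank_eq.symm
    _ ≤ ∑ v ∈ Γ.verts, finrank K (T v) :=
        Γ.sum_finrank_le hinj_V _ T (fun e he => (map_comap he).trans_le (htail e he))
          fun e he => by
            rw [Submodule.map_comp, map_comap he]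
            exact hhead e he

end FiniteSubgraph

section Augmentation

open Module

variable {X : Type*} (𝕜 : Type*) [Field 𝕜]

/-- The space of `𝕜`-valued functions supported on the finite set `S` whose values sum to zero. -/
noncomputable def augmentation (S : Finset X) : Submodule 𝕜 (X →₀ 𝕜) :=
  vectorSpan 𝕜 ((fun x => Finsupp.single x (1 : 𝕜)) '' (S : Set X))

theorem augmentation_mono : Monotone (augmentation 𝕜 : Finset X → Submodule 𝕜 (X →₀ 𝕜)) :=
  fun _ _ h => vectorSpan_mono 𝕜 (Set.image_mono (Finset.coe_subset.2 h))

instance (S : Finset X) : FiniteDimensional 𝕜 (augmentation 𝕜 S) :=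
  finiteDimensional_vectorSpan_of_finite 𝕜 (S.finite_toSet.image _)

theorem finrank_augmentation_add_one {S : Finset X} (hS : S.Nonempty) :
    finrank 𝕜 (augmentation 𝕜 S) + 1 = S.card := by
  classical
  obtain ⟨n, hn⟩ := Nat.exists_eq_add_one.2 hS.card_pos
  have affine_independent : AffineIndependent 𝕜 fun x : X => Finsupp.single x (1 : 𝕜) :=
    (Finsupp.linearIndependent_single_one 𝕜 X).affineIndependent
  rw [augmentation, ← Finset.coe_image, affine_independent.finrank_vectorSpan_image_finset hn, hn]

variable {𝕜}

theorem linearCombination_one_of_mem_augmentation {S : Finset X} {v : X →₀ 𝕜}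
    (hv : v ∈ augmentation 𝕜 S) : Finsupp.linearCombination 𝕜 (fun _ => (1 : 𝕜)) v = 0 := by
  suffices augmentation 𝕜 S ≤ LinearMap.ker (Finsupp.linearCombination 𝕜 fun _ => (1 : 𝕜)) from
    this hv
  rw [augmentation, vectorSpan, Submodule.span_le]
  rintro _ ⟨_, ⟨x, -, rfl⟩, _, ⟨y, -, rfl⟩, rfl⟩
  simp

theorem map_augmentation {Y : Type*} [DecidableEq Y] (f : X → Y) (S : Finset X) :
    (augmentation 𝕜 S).map (Finsupp.lmapDomain 𝕜 𝕜 f) = augmentation 𝕜 (S.image f) := by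
  have := (Finsupp.lmapDomain 𝕜 𝕜 f).toAffineMap.map_vectorSpan
    (s := (fun x => Finsupp.single x (1 : 𝕜)) '' (S : Set X))
  rw [Set.image_image] at this
  rw [augmentation, augmentation, Finset.coe_image, Set.image_image]
  simpa using this

variable (𝕜) in
theorem card_eq_sum_finrank_augmentation_add_card_image {α β : Type*} [DecidableEq β]
    (s : Finset α) (f : α → β) {ψ : β → X → α} (hψ : ∀ b, Function.Injective (ψ b))
    (hf : ∀ a b, a ∈ Set.range (ψ b) ↔ f a = b) :
    s.card = ∑ b ∈ s.image f, finrank 𝕜 (augmentation 𝕜 (s.preimage (ψ b) (hψ b).injOn)) +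
      (s.image f).card := by
  classical
  rw [Finset.card_eq_sum_card_image f, (s.image f).card_eq_sum_ones, ← Finset.sum_add_distrib]
  refine Finset.sum_congr rfl fun b hb => ?_
  have card_preimage : (s.preimage (ψ b) (hψ b).injOn).card = {a ∈ s | f a = b}.card := by
    simp only [Finset.card_preimage, hf]
  obtain ⟨a, ha, hab⟩ := Finset.mem_image.1 hb
  rw [← card_preimage, finrank_augmentation_add_one 𝕜 (Finset.card_pos.1 _)]
  exact card_preimage ▸ Finset.card_pos.2 ⟨a, Finset.mem_filter.2 ⟨ha, hab⟩⟩

end Augmentation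

namespace FiniteSubgraph

open Module

section Map

variable {ι Y Z : Type*} [MulAction (FreeGroup ι) Z] [MulAction (FreeGroup ι) Y]

/-- The image of a finite subgraph under the graph morphism given by an equivariant map. -/
def map [DecidableEq ι] [DecidableEq Y] (φ : Z →[FreeGroup ι] Y) (Γ : FiniteSubgraph ι Z) :
    FiniteSubgraph ι Y where
  verts := Γ.verts.image φ
  edges := Γ.edges.image (Prod.map φ id)
  tail_mem h := by
    obtain ⟨e, he, rfl⟩ := Finset.mem_image.1 h
    exact Finset.mem_image_of_mem φ (Γ.tail_mem he)
  head_mem h := by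
    obtain ⟨e, he, rfl⟩ := Finset.mem_image.1 h
    exact Finset.mem_image.2 ⟨_, Γ.head_mem he, map_smul φ _ _⟩

end Map

variable {ι X Y : Type*} [MulAction (FreeGroup ι) X] [MulAction (FreeGroup ι) Y]
  [MulAction.IsPretransitive (FreeGroup ι) X] {x₀ : X}

theorem sum_finrank_augmentation_le (𝕜 : Type*) [Field 𝕜]
    (hx₀ : IsRetract (MulAction.stabilizer (FreeGroup ι) x₀))
    (Γ : FiniteSubgraph ι Y) {S : Y × ι → Finset X} {T : Y → Finset X}
    (htail : ∀ e ∈ Γ.edges, S e ⊆ T e.1)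
    (hhead : ∀ e ∈ Γ.edges, ∀ x ∈ S e, head (x, e.2) ∈ T (head e)) :
    ∑ e ∈ Γ.edges, finrank 𝕜 (augmentation 𝕜 (S e)) ≤
      ∑ v ∈ Γ.verts, finrank 𝕜 (augmentation 𝕜 (T v)) := by
  classical
  refine Γ.sum_finrank_le_of_le (augmentation 𝕜 (Γ.edges.biUnion S))
    (b := fun i => Finsupp.lmapDomain 𝕜 𝕜 (FreeGroup.of i • ·))
    (fun u hu hsum => eq_zero_of_boundary_eq_zero hx₀
      (fun i => linearCombination_one_of_mem_augmentation (hu i)) hsum)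
    _ _ (fun e he => ?_) (fun e he => ?_) fun e he => ?_
  · exact augmentation_mono 𝕜 (Finset.subset_biUnion_of_mem S he)
  · exact augmentation_mono 𝕜 (htail e he)
  · rw [map_augmentation]
    exact augmentation_mono 𝕜 (Finset.image_subset_iff.2 (hhead e he))

theorem excess_le_excess_map_snd [DecidableEq ι] [DecidableEq Y]
    (hx₀ : IsRetract (MulAction.stabilizer (FreeGroup ι) x₀)) (Γ : FiniteSubgraph ι (X × Y)) :
    Γ.excess ≤ (Γ.map (MulActionHom.snd (FreeGroup ι) X Y)).excess := by
  let Δ := Γ.map (MulActionHom.snd (FreeGroup ι) X Y)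
  have edge_injective (e : Y × ι) : Function.Injective fun x : X => ((x, e.1), e.2) :=
    fun x x' h => by simpa using h
  have vert_injective (y : Y) : Function.Injective fun x : X => (x, y) := Prod.mk_left_injective y
  have range_edge (a : (X × Y) × ι) (e : Y × ι) :
      (a ∈ Set.range fun x : X => ((x, e.1), e.2)) ↔ Prod.map Prod.snd id a = e := by
    simp [Prod.ext_iff, eq_comm]
  have range_vert (a : X × Y) (y : Y) : (a ∈ Set.range fun x : X => (x, y)) ↔ a.2 = y := by
    simp [Prod.ext_iff, eq_comm]
  let S (e : Y × ι) : Finset X := Γ.edges.preimage _ (edge_injective e).injOn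
  let T (y : Y) : Finset X := Γ.verts.preimage _ (vert_injective y).injOn
  have mem_S {x : X} {e : Y × ι} : x ∈ S e ↔ ((x, e.1), e.2) ∈ Γ.edges := Finset.mem_preimage
  have mem_T {x : X} {y : Y} : x ∈ T y ↔ (x, y) ∈ Γ.verts := Finset.mem_preimage
  have card_edges : Γ.edges.card =
      ∑ e ∈ Δ.edges, finrank ℚ (augmentation ℚ (S e)) + Δ.edges.card :=
    card_eq_sum_finrank_augmentation_add_card_image ℚ Γ.edges _ edge_injective range_edge
  have card_verts : Γ.verts.card =
      ∑ y ∈ Δ.verts, finrank ℚ (augmentation ℚ (T y)) + Δ.verts.card :=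
    card_eq_sum_finrank_augmentation_add_card_image ℚ Γ.verts _ vert_injective range_vert
  have sum_le := Δ.sum_finrank_augmentation_le ℚ hx₀ (S := S) (T := T)
    (fun e _ x hx => mem_T.2 (Γ.tail_mem (mem_S.1 hx)))
    fun e _ x hx => mem_T.2 (Γ.head_mem (mem_S.1 hx))
  change Γ.excess ≤ Δ.excess
  unfold excess
  omega

end FiniteSubgraph

end FreeGroupAction

open FreeGroupAction in
theorem rank_inter_retract_le_general {ι : Type*} (H R : Subgroup (FreeGroup ι))
    (hR : IsRetract R) (m : ℕ) (hH : HasFreeRank H m) : ∃ j ≤ m, HasFreeRank (H ⊓ R) j := by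
  classical
  let x₀ : FreeGroup ι ⧸ R := (1 : FreeGroup ι)
  let y₀ : FreeGroup ι ⧸ H := (1 : FreeGroup ι)
  have stabilizer_x₀ : MulAction.stabilizer (FreeGroup ι) x₀ = R := MulAction.stabilizer_quotient R
  have stabilizer_y₀ : MulAction.stabilizer (FreeGroup ι) y₀ = H := MulAction.stabilizer_quotient H
  have stabilizer_prod : MulAction.stabilizer (FreeGroup ι) (x₀, y₀) = R ⊓ H :=
    (Subgroup.ext fun _ => Prod.mk_inj).trans (congrArg₂ (· ⊓ ·) stabilizer_x₀ stabilizer_y₀)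
  rw [inf_comm, ← stabilizer_prod]
  rw [← stabilizer_x₀] at hR
  rw [← stabilizer_y₀] at hH
  exact exists_hasFreeRank_stabilizer (x₀, y₀) fun Γ hΓ =>
    (Γ.excess_le_excess_map_snd hR).trans_lt
      (FiniteSubgraph.excess_lt_of_hasFreeRank hH _ (hΓ.image _))

theorem rank_inter_retract_le {n : ℕ} (hn : 2 ≤ n)
    (H R : Subgroup (FreeGroup (Fin n))) (hR : IsRetract R)
    (m : ℕ) (hm : m ≤ 3) (hH : HasFreeRank H m) :
    ∃ j ≤ m, HasFreeRank (H ⊓ R) j :=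
  rank_inter_retract_le_general H R hR m hH
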